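/- Let G be a finite simple graph with maximum average degree mad(G) < 9/2 and maximum degree Δ(G) ≥ 9. Then χ_i(G) ≤ Δ(G) + 4. -/

import Mathlib

open SimpleGraph

/-- An incidence coloring of `G` with `n` colors, where `φ v u` is the color of the
incidence `(v, vu)` (meaningful when `G.Adj v u`): two distinct adjacent incidences
`(v, vu)` and `(w, wx)` receive distinct colors. Incidences `(v, e)` and `(w, f)` are
adjacent if `v = w`, or `e = f`, or the edge `vw` equals `e` or `f`. -/
def IsIncidenceColoring {V : Type*} (G : SimpleGraph V) {n : ℕ} (φ : V → V → Fin n) : Prop :=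
  ∀ ⦃v u w x : V⦄, G.Adj v u → G.Adj w x → (v, u) ≠ (w, x) →
    (v = w ∨ s(v, u) = s(w, x) ∨ s(v, w) = s(v, u) ∨ s(v, w) = s(w, x)) →
    φ v u ≠ φ w x

/-- `G` admits an incidence `(n, ℓ)`-coloring: an incidence coloring with `n` colors such
that for every vertex `v`, at most `ℓ` distinct colors appear on the incidences of the
form `(u, uv)` where `u` ranges over the neighbors of `v`. -/
def HasIncidenceColoring {V : Type*} (G : SimpleGraph V) (n ℓ : ℕ) : Prop :=
  ∃ φ : V → V → Fin n, IsIncidenceColoring G φ ∧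
    ∀ v : V, ({c : Fin n | ∃ u : V, G.Adj u v ∧ φ u v = c}).ncard ≤ ℓ

/-- The incidence chromatic number: the least `n` such that `G` admits an incidence
`n`-coloring. -/
noncomputable def incChromaticNumber {V : Type*} (G : SimpleGraph V) : ℕ :=
  sInf {n : ℕ | ∃ φ : V → V → Fin n, IsIncidenceColoring G φ}

/-- `mad(G) < q`: every nonempty subgraph `H` of `G` satisfies `2|E(H)| < q·|V(H)|`. -/
def MadLT {V : Type*} (G : SimpleGraph V) (q : ℝ) : Prop :=
  ∀ H : G.Subgraph, H.verts.Nonempty →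
    (2 * H.edgeSet.ncard : ℝ) < q * H.verts.ncard

section IncidenceExtension

open Finset

variable {V : Type*}

open Classical in
/-- The neighbors of `x` in `G` that lie in `W`. -/
noncomputable def nbrsIn (G : SimpleGraph V) (W : Finset V) (x : V) : Finset V :=
  W.filter (G.Adj x)

lemma mem_nbrsIn {G : SimpleGraph V} {W : Finset V} {x y : V} :
    y ∈ nbrsIn G W x ↔ y ∈ W ∧ G.Adj x y := by
  classical
  simp [nbrsIn]

lemma nbrsIn_insert_self [DecidableEq V] {G : SimpleGraph V} {W : Finset V} {v : V} :
    nbrsIn G (insert v W) v = nbrsIn G W v := by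
  ext y
  simp only [mem_nbrsIn, mem_insert]
  constructor
  · rintro ⟨rfl | hy, hadj⟩
    · exact absurd hadj (G.loopless.irrefl _)
    · exact ⟨hy, hadj⟩
  · exact fun ⟨hy, hadj⟩ => ⟨Or.inr hy, hadj⟩

open Classical in
/-- The colors of the incidences `(x, xy)` with `y ∈ W`. -/
noncomputable def outColors (G : SimpleGraph V) (W : Finset V) {n : ℕ} (φ : V → V → Fin n)
    (x : V) : Finset (Fin n) :=
  (nbrsIn G W x).image (φ x)

open Classical in
/-- The colors of the incidences `(y, yx)` with `y ∈ W`. -/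
noncomputable def inColors (G : SimpleGraph V) (W : Finset V) {n : ℕ} (φ : V → V → Fin n)
    (x : V) : Finset (Fin n) :=
  (nbrsIn G W x).image (fun y => φ y x)

lemma mem_outColors {G : SimpleGraph V} {W : Finset V} {n : ℕ} {φ : V → V → Fin n} {x : V}
    {k : Fin n} : k ∈ outColors G W φ x ↔ ∃ y, (y ∈ W ∧ G.Adj x y) ∧ φ x y = k := by
  simp [outColors, mem_nbrsIn]

lemma mem_inColors {G : SimpleGraph V} {W : Finset V} {n : ℕ} {φ : V → V → Fin n} {x : V}
    {k : Fin n} : k ∈ inColors G W φ x ↔ ∃ y, (y ∈ W ∧ G.Adj x y) ∧ φ y x = k := by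
  simp [inColors, mem_nbrsIn]

/-- `φ` is an incidence coloring of the subgraph of `G` induced on `W` for which at most four
colors appear on the incidences pointing to any given vertex. -/
def IsGoodOn (G : SimpleGraph V) (W : Finset V) {n : ℕ} (φ : V → V → Fin n) : Prop :=
  ∀ x ∈ W, Set.InjOn (φ x) (nbrsIn G W x) ∧
    Disjoint (outColors G W φ x) (inColors G W φ x) ∧ #(inColors G W φ x) ≤ 4

lemma IsGoodOn.isIncidenceColoring [Fintype V] {G : SimpleGraph V} {n : ℕ}
    {φ : V → V → Fin n} (h : IsGoodOn G univ φ) : IsIncidenceColoring G φ := by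
  have inj : ∀ x y z, G.Adj x y → G.Adj x z → φ x y = φ x z → y = z := fun x y z hy hz he =>
    (h x (mem_univ x)).1 (by simp [mem_nbrsIn, hy]) (by simp [mem_nbrsIn, hz]) he
  have dis : ∀ x y z, G.Adj x y → G.Adj x z → φ y x ≠ φ x z := fun x y z hy hz he =>
    Finset.disjoint_left.1 (h x (mem_univ x)).2.1
      (mem_outColors.2 ⟨z, ⟨mem_univ z, hz⟩, rfl⟩) (mem_inColors.2 ⟨y, ⟨mem_univ y, hy⟩, he⟩)
  intro v u w x hvu hwx hne hadj heq
  have := hvu.symm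
  have := hwx.symm
  simp only [Sym2.eq_iff] at hadj
  grind

/-- Extending a good coloring to one more vertex `v`: `a u` is the color of `(u, uv)` and `c u`
is the color of `(v, vu)`. -/
lemma IsGoodOn.insert_vertex [DecidableEq V] {G : SimpleGraph V} {W : Finset V} {n : ℕ}
    {φ : V → V → Fin n} (h : IsGoodOn G W φ) {v : V} (hv : v ∉ W)
    (S : V → Finset (Fin n)) (a c : V → Fin n)
    (hIS : ∀ u ∈ nbrsIn G W v, inColors G W φ u ⊆ S u)
    (hSA : ∀ u ∈ nbrsIn G W v, Disjoint (outColors G W φ u) (S u))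
    (hS : ∀ u ∈ nbrsIn G W v, #(S u) ≤ 4)
    (haA : ∀ u ∈ nbrsIn G W v, a u ∉ outColors G W φ u)
    (haS : ∀ u ∈ nbrsIn G W v, a u ∉ S u)
    (hcS : ∀ u ∈ nbrsIn G W v, c u ∈ S u)
    (hc : Set.InjOn c (nbrsIn G W v))
    (hca : ∀ u ∈ nbrsIn G W v, ∀ w ∈ nbrsIn G W v, c u ≠ a w)
    (hcard : #(nbrsIn G W v) ≤ 4) :
    IsGoodOn G (insert v W)
      (fun x y => if x = v then c y else if y = v then a x else φ x y) := by
  set ψ : V → V → Fin n := fun x y => if x = v then c y else if y = v then a x else φ x y with hψ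
  have hψv : ∀ y, ψ v y = c y := fun y => by simp [hψ]
  have hψa : ∀ x, x ≠ v → ψ x v = a x := fun x hx => by simp [hψ, hx]
  have hψφ : ∀ x y, x ≠ v → y ≠ v → ψ x y = φ x y := fun x y hx hy => by simp [hψ, hx, hy]
  have hNv : nbrsIn G (insert v W) v = nbrsIn G W v := nbrsIn_insert_self
  have hWv : ∀ y ∈ W, y ≠ v := fun y hy he => hv (he ▸ hy)
  intro x hx
  rcases eq_or_ne x v with rfl | hxv
  · refine ⟨?_, ?_, ?_⟩
    · rw [hNv]
      intro y hy z hz he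
      exact hc hy hz (by simpa [hψv] using he)
    · rw [Finset.disjoint_left]
      intro k hk hk'
      simp only [outColors, inColors, hNv, mem_image] at hk hk'
      obtain ⟨y, hy, rfl⟩ := hk
      obtain ⟨z, hz, he⟩ := hk'
      rw [hψv, hψa z (hWv z (mem_nbrsIn.1 hz).1)] at he
      exact hca y hy z hz he.symm
    · simp only [inColors, hNv]
      exact card_image_le.trans hcard
  have hxW : x ∈ W := (mem_insert.1 hx).resolve_left hxv
  obtain ⟨h1, h2, h3⟩ := h x hxW
  have hmem : ∀ y, y ∈ nbrsIn G (insert v W) x →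
      (y = v ∧ x ∈ nbrsIn G W v) ∨ (y ≠ v ∧ y ∈ nbrsIn G W x) := by
    intro y hy
    obtain ⟨hy, hadj⟩ := mem_nbrsIn.1 hy
    rcases mem_insert.1 hy with rfl | hy
    · exact Or.inl ⟨rfl, mem_nbrsIn.2 ⟨hxW, hadj.symm⟩⟩
    · exact Or.inr ⟨hWv y hy, mem_nbrsIn.2 ⟨hy, hadj⟩⟩
  have hout : ∀ k ∈ outColors G (insert v W) ψ x,
      (k = a x ∧ x ∈ nbrsIn G W v) ∨ k ∈ outColors G W φ x := by
    intro k hk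
    simp only [outColors, mem_image] at hk ⊢
    obtain ⟨y, hy, rfl⟩ := hk
    rcases hmem y hy with ⟨rfl, hN⟩ | ⟨hyv, hyN⟩
    · exact Or.inl ⟨hψa x hxv, hN⟩
    · exact Or.inr ⟨y, hyN, (hψφ x y hxv hyv).symm⟩
  have hin : ∀ k ∈ inColors G (insert v W) ψ x,
      (k = c x ∧ x ∈ nbrsIn G W v) ∨ k ∈ inColors G W φ x := by
    intro k hk
    simp only [inColors, mem_image] at hk ⊢
    obtain ⟨y, hy, rfl⟩ := hk
    rcases hmem y hy with ⟨rfl, hN⟩ | ⟨hyv, hyN⟩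
    · exact Or.inl ⟨hψv x, hN⟩
    · exact Or.inr ⟨y, hyN, (hψφ y x hyv hxv).symm⟩
  refine ⟨?_, ?_, ?_⟩
  · intro y hy z hz he
    rcases hmem y hy with ⟨rfl, hN⟩ | ⟨hyv, hyN⟩ <;>
      rcases hmem z hz with ⟨rfl, hN'⟩ | ⟨hzv, hzN⟩
    · rfl
    · rw [hψa x hxv, hψφ x z hxv hzv] at he
      exact absurd (mem_outColors.2 ⟨z, mem_nbrsIn.1 hzN, he.symm⟩) (haA x hN)
    · rw [hψa x hxv, hψφ x y hxv hyv] at he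
      exact absurd (mem_outColors.2 ⟨y, mem_nbrsIn.1 hyN, he⟩) (haA x hN')
    · rw [hψφ x z hxv hzv, hψφ x y hxv hyv] at he
      exact h1 hyN hzN he
  · rw [Finset.disjoint_left]
    intro k hk hk'
    rcases hout k hk with ⟨rfl, hN⟩ | hk <;> rcases hin _ hk' with ⟨he, hN'⟩ | hk'
    · exact hca x hN x hN he.symm
    · exact haS x hN (hIS x hN hk')
    · exact Finset.disjoint_left.1 (hSA x hN') hk (he ▸ hcS x hN')
    · exact Finset.disjoint_left.1 h2 hk hk'
  · by_cases hN : x ∈ nbrsIn G W v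
    · refine (card_le_card fun k hk => ?_).trans (hS x hN)
      rcases hin k hk with ⟨rfl, _⟩ | hk
      · exact hcS x hN
      · exact hIS x hN hk
    · refine (card_le_card fun k hk => ?_).trans h3
      exact (hin k hk).resolve_left fun h => hN h.2

end IncidenceExtension

section Selection

open Finset

/-- Colors `a u ∈ P u` and `c u ∈ S u` for `u ∈ N` such that the `c u` are pairwise distinct and
differ from all the `a w`. -/
def HasSelection {V C : Type*} (N : Finset V) (S P : V → Finset C) : Prop :=
  ∃ a c : V → C, (∀ u ∈ N, a u ∈ P u) ∧ (∀ u ∈ N, c u ∈ S u) ∧ Set.InjOn c N ∧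
    ∀ u ∈ N, ∀ w ∈ N, c u ≠ a w

variable {V C : Type*} [DecidableEq V] [DecidableEq C]

lemma hasSelection_of_card_le_two [Nonempty C] {N : Finset V} {S P : V → Finset C}
    (hN : #N ≤ 2) (hS : ∀ u ∈ N, #(S u) = 4) (hSP : ∀ u ∈ N, ∀ x ∈ S u, x ∉ P u)
    (hP : ∀ u ∈ N, 1 ≤ #(P u)) : HasSelection N S P := by
  have hP' : ∀ u ∈ N, ∃ x, x ∈ P u := fun u hu => card_pos.1 (hP u hu)
  have hcases : #N = 0 ∨ #N = 1 ∨ #N = 2 := by omega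
  rcases hcases with h | h | h
  · obtain rfl := card_eq_zero.1 h
    obtain ⟨x⟩ := ‹Nonempty C›
    exact ⟨fun _ => x, fun _ => x, by simp, by simp, by simp, by simp⟩
  · obtain ⟨u, rfl⟩ := card_eq_one.1 h
    simp only [mem_singleton, forall_eq] at hS hSP hP'
    obtain ⟨a, ha⟩ := hP'
    obtain ⟨c, hc⟩ := card_pos.1 (show 0 < #(S u) by omega)
    refine ⟨fun _ => a, fun _ => c, by simpa, by simpa, by simp, ?_⟩
    rintro - - - - (he : c = a)
    exact hSP _ hc (he ▸ ha)
  · obtain ⟨u, v, huv, rfl⟩ := card_eq_two.1 h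
    obtain ⟨a, ha⟩ := hP' u (by simp)
    obtain ⟨b, hb⟩ := hP' v (by simp)
    have hSu := hS u (by simp)
    have hSv := hS v (by simp)
    have hu := hSP u (by simp)
    have hv := hSP v (by simp)
    obtain ⟨c, hc, hcb⟩ := exists_mem_notMem_of_card_lt_card (s := {b}) (t := S u)
      (by simp [hSu])
    obtain ⟨d, hd, hdn⟩ := exists_mem_notMem_of_card_lt_card (s := {a, c}) (t := S v)
      (card_le_two.trans_lt (by omega))
    refine ⟨fun x => if x = u then a else b, fun x => if x = u then c else d, ?_, ?_, ?_, ?_⟩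
    · grind
    · grind
    · intro x hx y hy
      grind
    · grind

lemma hasSelection_of_card_eq_three {N : Finset V} {S P : V → Finset C}
    (hN : #N = 3) (hS : ∀ u ∈ N, #(S u) = 4) (hSP : ∀ u ∈ N, ∀ x ∈ S u, x ∉ P u)
    (hP : ∀ u ∈ N, 1 ≤ #(P u)) (hP2 : ∃ u ∈ N, 2 ≤ #(P u)) : HasSelection N S P := by
  obtain ⟨u, hu, hPu⟩ := hP2
  obtain ⟨v, w, hvw, hN'⟩ := card_eq_two.1 (show #(N.erase u) = 2 by rw [card_erase_of_mem hu, hN])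
  have hv := mem_of_mem_erase (show v ∈ N.erase u by simp [hN'])
  have hw := mem_of_mem_erase (show w ∈ N.erase u by simp [hN'])
  obtain rfl : N = {u, v, w} := by rw [← hN', insert_erase hu]
  obtain ⟨P', hP'P, hP'⟩ := exists_subset_card_eq hPu
  obtain ⟨p, q, hpq, rfl⟩ := card_eq_two.1 hP'
  obtain ⟨b, hb⟩ := card_pos.1 (hP v hv)
  obtain ⟨e, he⟩ := card_pos.1 (hP w hw)
  have hSu := hS u hu
  have hSv := hS v hv
  have hSw := hS w hw
  have hdu := hSP u hu
  have hdv := hSP v hv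
  have hdw := hSP w hw
  obtain ⟨y, hy, hyn⟩ := exists_mem_notMem_of_card_lt_card (s := {e, p, q}) (t := S v)
    (card_le_three.trans_lt (by omega))
  obtain ⟨x, hx, hxn⟩ := exists_mem_notMem_of_card_lt_card (s := {b, e, y}) (t := S u)
    (card_le_three.trans_lt (by omega))
  obtain ⟨z, hz, hzn⟩ := exists_mem_notMem_of_card_lt_card (s := {b, x, y}) (t := S w)
    (card_le_three.trans_lt (by omega))
  obtain ⟨a, ha, han⟩ := exists_mem_notMem_of_card_lt_card (s := {z}) (t := {p, q})
    (by rw [hP']; simp)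
  have haP := hP'P ha
  have huv : u ≠ v := fun h => by simp [h] at hN; grind
  have huw : u ≠ w := fun h => by simp [h] at hN; grind
  simp only [mem_insert, mem_singleton, not_or] at *
  refine ⟨fun t => if t = u then a else if t = v then b else e,
    fun t => if t = u then x else if t = v then y else z, ?_, ?_, ?_, ?_⟩
  · grind
  · grind
  · intro s hs t ht
    grind
  · grind

lemma hasSelection_of_card_eq_four {N : Finset V} {S P : V → Finset C}
    (hN : #N = 4) (hS : ∀ u ∈ N, #(S u) = 4) (hSP : ∀ u ∈ N, ∀ x ∈ S u, x ∉ P u)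
    (hP : ∀ u ∈ N, 1 ≤ #(P u)) (hP3 : 3 ≤ #{u ∈ N | 5 ≤ #(P u)}) : HasSelection N S P := by
  obtain ⟨M, hM, hM3⟩ := exists_subset_card_eq hP3
  have hMN : M ⊆ N := hM.trans (filter_subset _ _)
  obtain ⟨u, hNM⟩ := card_eq_one.1 (show #(N \ M) = 1 by rw [card_sdiff_of_subset hMN]; omega)
  have huNM : u ∈ N \ M := by simp [hNM]
  have huN : u ∈ N := (mem_sdiff.1 huNM).1
  have huM : u ∉ M := (mem_sdiff.1 huNM).2
  have hNeq : ∀ t ∈ N, t = u ∨ t ∈ M := fun t ht => by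
    by_cases htM : t ∈ M
    · exact Or.inr htM
    · exact Or.inl (mem_singleton.1 (hNM ▸ mem_sdiff.2 ⟨ht, htM⟩))
  obtain ⟨v, w, z, hvw, hvz, hwz, rfl⟩ := card_eq_three.1 hM3
  have hv : v ∈ N := hMN (by simp)
  have hw : w ∈ N := hMN (by simp)
  have hz : z ∈ N := hMN (by simp)
  have hPv := (mem_filter.1 (hM (show v ∈ _ by simp))).2
  have hPw := (mem_filter.1 (hM (show w ∈ _ by simp))).2
  have hPz := (mem_filter.1 (hM (show z ∈ _ by simp))).2
  have hSu := hS u huN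
  have hSv := hS v hv
  have hSw := hS w hw
  have hSz := hS z hz
  have hdu := hSP u huN
  obtain ⟨a, ha⟩ := card_pos.1 (hP u huN)
  obtain ⟨cv, hcv, hcvn⟩ := exists_mem_notMem_of_card_lt_card (s := {a}) (t := S v)
    (by simp [hSv])
  obtain ⟨cw, hcw, hcwn⟩ := exists_mem_notMem_of_card_lt_card (s := {a, cv}) (t := S w)
    (card_le_two.trans_lt (by omega))
  obtain ⟨cz, hcz, hczn⟩ := exists_mem_notMem_of_card_lt_card (s := {a, cv, cw}) (t := S z)
    (card_le_three.trans_lt (by omega))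
  obtain ⟨cu, hcu, hcun⟩ := exists_mem_notMem_of_card_lt_card (s := {cv, cw, cz}) (t := S u)
    (card_le_three.trans_lt (by omega))
  have h4 : #{cu, cv, cw, cz} ≤ 4 := card_le_four
  obtain ⟨av, hav, havn⟩ := exists_mem_notMem_of_card_lt_card (h4.trans_lt hPv)
  obtain ⟨aw, haw, hawn⟩ := exists_mem_notMem_of_card_lt_card (h4.trans_lt hPw)
  obtain ⟨az, haz, hazn⟩ := exists_mem_notMem_of_card_lt_card (h4.trans_lt hPz)
  have hacu : cu ≠ a := fun h => hdu cu hcu (h ▸ ha)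
  simp only [mem_insert, mem_singleton, not_or] at huM hNeq hcvn hcwn hczn hcun havn hawn hazn
  clear hM hP hS hSP hNM huNM hM3 hMN hP3 h4 hN
  refine ⟨fun t => if t = u then a else if t = v then av else if t = w then aw else az,
    fun t => if t = u then cu else if t = v then cv else if t = w then cw else cz, ?_, ?_, ?_, ?_⟩
  · grind
  · grind
  · intro s hs t ht
    rcases hNeq s hs with rfl | rfl | rfl | rfl <;> rcases hNeq t ht with rfl | rfl | rfl | rfl <;>
      grind
  · intro s hs t ht
    rcases hNeq s hs with rfl | rfl | rfl | rfl <;> rcases hNeq t ht with rfl | rfl | rfl | rfl <;>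
      grind

end Selection

section Discharging

open Finset

variable {V : Type*}

lemma sum_card_nbrsIn [Fintype V] (G : SimpleGraph V) (W : Finset V) :
    ∑ x ∈ W, #(nbrsIn G W x) = 2 * ((⊤ : G.Subgraph).induce (W : Set V)).edgeSet.ncard := by
  classical
  set H := (⊤ : G.Subgraph).induce (W : Set V) with hH
  have hadj : ∀ x y, H.spanningCoe.Adj x y ↔ x ∈ W ∧ y ∈ W ∧ G.Adj x y := by
    intro x y
    simp [hH]
  have hE : H.edgeSet.ncard = #H.spanningCoe.edgeFinset := by
    rw [← H.edgeSet_spanningCoe, ← SimpleGraph.coe_edgeFinset, Set.ncard_coe_finset]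
  rw [hE, ← SimpleGraph.sum_degrees_eq_twice_card_edges]
  refine (sum_subset_zero_on_sdiff (subset_univ W) ?_ ?_)
  · intro x hx
    rw [← SimpleGraph.card_neighborFinset_eq_degree, card_eq_zero, eq_empty_iff_forall_notMem]
    intro y hy
    rw [SimpleGraph.mem_neighborFinset, hadj] at hy
    exact (mem_sdiff.1 hx).2 hy.1
  · intro x hx
    rw [← SimpleGraph.card_neighborFinset_eq_degree]
    congr 1
    ext y
    rw [SimpleGraph.mem_neighborFinset, hadj, mem_nbrsIn]
    simp [hx]

lemma sum_nbrsIn_comm {M : Type*} [AddCommMonoid M] (G : SimpleGraph V) (W : Finset V)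
    (f : V → V → M) :
    ∑ x ∈ W, ∑ y ∈ nbrsIn G W x, f x y = ∑ x ∈ W, ∑ y ∈ nbrsIn G W x, f y x := by
  classical
  refine sum_comm' fun x y => ?_
  simp only [mem_nbrsIn, G.adj_comm x y]
  tauto

/-- The charge, in quarters, that a vertex of degree `d` sends to each neighbor of degree at
most four. -/
def sentCharge (d : ℕ) : ℤ := if 9 ≤ d then 2 else if 6 ≤ d then 1 else 0

lemma sentCharge_nonneg (d : ℕ) : 0 ≤ sentCharge d := by
  unfold sentCharge
  split_ifs <;> norm_num

/-- In a graph with `mad < 9/2`, every nonempty induced subgraph contains a reducible vertex. -/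
lemma MadLT.exists_reducible [Fintype V] {G : SimpleGraph V} (hmad : MadLT G (9 / 2))
    {W : Finset V} (hW : W.Nonempty) :
    ∃ v ∈ W, #(nbrsIn G W v) ≤ 2 ∨
      (#(nbrsIn G W v) = 3 ∧ ∃ u ∈ nbrsIn G W v, #(nbrsIn G W u) ≤ 8) ∨
      (#(nbrsIn G W v) = 4 ∧ 3 ≤ #{u ∈ nbrsIn G W v | #(nbrsIn G W u) ≤ 5}) := by
  by_contra! hcon
  set d : V → ℕ := fun x => #(nbrsIn G W x) with hd
  have key : ∀ v ∈ W, ∑ u ∈ nbrsIn G W v, (if d u ≤ 4 then sentCharge (d v) else 0) ≤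
      4 * (d v : ℤ) - 18 + ∑ u ∈ nbrsIn G W v, (if d v ≤ 4 then sentCharge (d u) else 0) := by
    intro v hv
    obtain ⟨h2, h3, h4⟩ := hcon v hv
    have hsent : ∑ u ∈ nbrsIn G W v, (if d u ≤ 4 then sentCharge (d v) else 0) ≤
        d v * sentCharge (d v) := by
      rw [← nsmul_eq_mul]
      refine sum_le_card_nsmul _ _ _ fun u _ => ?_
      split_ifs
      · exact le_rfl
      · exact sentCharge_nonneg _
    have hdv : 3 ≤ d v := h2
    rcases le_or_gt (d v) 4 with hle | hgt
    · simp only [hle, if_true]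
      have h0 : sentCharge (d v) = 0 := by
        unfold sentCharge
        rw [if_neg (by omega), if_neg (by omega)]
      refine (hsent.trans_eq (by rw [h0, mul_zero])).trans ?_
      rcases Nat.lt_or_ge (d v) 4 with hlt | hge
      · have hdv3 : d v = 3 := by omega
        have : ∑ u ∈ nbrsIn G W v, sentCharge (d u) = ∑ u ∈ nbrsIn G W v, 2 :=
          sum_congr rfl fun u hu => by
            have : 9 ≤ d u := h3 hdv3 u hu
            simp [sentCharge, this]
        rw [this, sum_const, nsmul_eq_mul, show #(nbrsIn G W v) = 3 from hdv3, hdv3]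
        norm_num
      · have hdv4 : d v = 4 := by omega
        have hlow : #{u ∈ nbrsIn G W v | d u ≤ 5} < 3 := h4 hdv4
        have hsplit := card_filter_add_card_filter_not (s := nbrsIn G W v) (fun u => d u ≤ 5)
        rw [show #(nbrsIn G W v) = 4 from hdv4] at hsplit
        have hsum : (#{u ∈ nbrsIn G W v | ¬ d u ≤ 5} : ℤ) ≤
            ∑ u ∈ nbrsIn G W v, sentCharge (d u) := by
          rw [card_filter]
          push_cast
          refine sum_le_sum fun u _ => ?_
          unfold sentCharge
          split_ifs <;> omega
        rw [hdv4]
        push_cast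
        omega
    · simp only [if_neg (not_le.2 hgt), sum_const_zero, add_zero]
      refine hsent.trans ?_
      unfold sentCharge
      split_ifs <;> omega
  have hsum := sum_le_sum key
  rw [sum_add_distrib, sum_nbrsIn_comm G W fun v u => if d u ≤ 4 then sentCharge (d v) else 0,
    le_add_iff_nonneg_left, sum_sub_distrib, ← mul_sum, sum_const, nsmul_eq_mul] at hsum
  have hedges := sum_card_nbrsIn G W
  have hlt := hmad ((⊤ : G.Subgraph).induce (W : Set V)) (by simpa using hW)
  rw [SimpleGraph.Subgraph.induce_verts, Set.ncard_coe_finset] at hlt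
  have hsum' : (#W : ℝ) * 18 ≤ 4 * ∑ x ∈ W, (d x : ℝ) := by exact_mod_cast sub_nonneg.1 hsum
  have hedges' : ∑ x ∈ W, (d x : ℝ) =
      2 * (((⊤ : G.Subgraph).induce (W : Set V)).edgeSet.ncard : ℝ) := by exact_mod_cast hedges
  linarith

end Discharging

section Main

open Finset

variable {V : Type*}

lemma card_nbrsIn_insert_of_adj [DecidableEq V] {G : SimpleGraph V} {W : Finset V} {v u : V}
    (hv : v ∉ W) (hu : u ∈ nbrsIn G W v) : #(nbrsIn G (insert v W) u) = #(nbrsIn G W u) + 1 := by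
  have : nbrsIn G (insert v W) u = insert v (nbrsIn G W u) := by
    ext y
    have := (mem_nbrsIn.1 hu).2.symm
    simp only [mem_nbrsIn, mem_insert]
    constructor
    · tauto
    · rintro (rfl | h) <;> tauto
  rw [this, card_insert_of_notMem fun h => hv (mem_nbrsIn.1 h).1]

variable [Fintype V]

lemma card_nbrsIn_le_maxDegree (G : SimpleGraph V) [DecidableRel G.Adj] (W : Finset V) (x : V) :
    #(nbrsIn G W x) ≤ G.maxDegree := by
  refine (card_le_card fun y hy => ?_).trans (G.degree_le_maxDegree x)
  exact (G.mem_neighborFinset x y).2 (mem_nbrsIn.1 hy).2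

lemma IsGoodOn.exists_insert [DecidableEq V] {G : SimpleGraph V} [DecidableRel G.Adj]
    (hΔ : 9 ≤ G.maxDegree) {W : Finset V} {v : V} (hv : v ∉ W)
    {φ : V → V → Fin (G.maxDegree + 4)} (hφ : IsGoodOn G W φ)
    (hred : #(nbrsIn G W v) ≤ 2 ∨
      (#(nbrsIn G W v) = 3 ∧ ∃ u ∈ nbrsIn G W v, #(nbrsIn G W u) ≤ 7) ∨
      (#(nbrsIn G W v) = 4 ∧ 3 ≤ #{u ∈ nbrsIn G W v | #(nbrsIn G W u) ≤ 4})) :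
    ∃ ψ : V → V → Fin (G.maxDegree + 4), IsGoodOn G (insert v W) ψ := by
  have hdeg : ∀ u ∈ nbrsIn G W v, #(nbrsIn G W u) + 1 ≤ G.maxDegree := fun u hu => by
    rw [← card_nbrsIn_insert_of_adj hv hu]
    exact card_nbrsIn_le_maxDegree G _ u
  have hcompl : ∀ u ∈ nbrsIn G W v,
      #(outColors G W φ u)ᶜ = G.maxDegree + 4 - #(nbrsIn G W u) := fun u hu => by
    rw [card_compl, Fintype.card_fin, outColors,
      card_image_of_injOn (hφ u (mem_nbrsIn.1 hu).1).1]
  have hex : ∀ u, ∃ T : Finset (Fin (G.maxDegree + 4)), u ∈ nbrsIn G W v →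
      inColors G W φ u ⊆ T ∧ T ⊆ (outColors G W φ u)ᶜ ∧ #T = 4 := fun u => by
    by_cases hu : u ∈ nbrsIn G W v
    · obtain ⟨-, h2, h3⟩ := hφ u (mem_nbrsIn.1 hu).1
      obtain ⟨T, h⟩ := exists_subsuperset_card_eq (n := 4)
        (subset_compl_iff_disjoint_left.2 h2) h3 (by have := hcompl u hu; have := hdeg u hu; omega)
      exact ⟨T, fun _ => h⟩
    · exact ⟨∅, fun h => absurd h hu⟩
  choose S hS using hex
  set P : V → Finset (Fin (G.maxDegree + 4)) := fun u => (outColors G W φ u)ᶜ \ S u with hPdef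
  have hPcard : ∀ u ∈ nbrsIn G W v, #(P u) = G.maxDegree - #(nbrsIn G W u) := fun u hu => by
    have h1 := hcompl u hu
    have h2 := hS u hu
    rw [hPdef, card_sdiff_of_subset h2.2.1]
    omega
  have hS4 : ∀ u ∈ nbrsIn G W v, #(S u) = 4 := fun u hu => (hS u hu).2.2
  have hSP : ∀ u ∈ nbrsIn G W v, ∀ x ∈ S u, x ∉ P u := fun u _ x hx hx' =>
    (mem_sdiff.1 hx').2 hx
  have hP1 : ∀ u ∈ nbrsIn G W v, 1 ≤ #(P u) := fun u hu => by
    have := hPcard u hu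
    have := hdeg u hu
    omega
  have hsel : HasSelection (nbrsIn G W v) S P := by
    rcases hred with h | ⟨h, u, hu, hu7⟩ | ⟨h, h3⟩
    · exact hasSelection_of_card_le_two h hS4 hSP hP1
    · exact hasSelection_of_card_eq_three h hS4 hSP hP1
        ⟨u, hu, by rw [hPcard u hu]; omega⟩
    · refine hasSelection_of_card_eq_four h hS4 hSP hP1 (h3.trans (card_le_card fun u hu => ?_))
      rw [mem_filter] at hu ⊢
      exact ⟨hu.1, by rw [hPcard u hu.1]; omega⟩
  obtain ⟨a, c, ha, hc, hinj, hca⟩ := hsel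
  refine ⟨_, hφ.insert_vertex hv S a c (fun u hu => (hS u hu).1)
    (fun u hu => subset_compl_iff_disjoint_left.1 (hS u hu).2.1) (fun u hu => (hS4 u hu).le)
    (fun u hu => mem_compl.1 (mem_sdiff.1 (ha u hu)).1) (fun u hu => (mem_sdiff.1 (ha u hu)).2)
    hc hinj hca (by omega)⟩

lemma MadLT.exists_isGoodOn {G : SimpleGraph V} [DecidableRel G.Adj] (hmad : MadLT G (9 / 2))
    (hΔ : 9 ≤ G.maxDegree) (W : Finset V) :
    ∃ φ : V → V → Fin (G.maxDegree + 4), IsGoodOn G W φ := by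
  classical
  induction W using Finset.strongInduction with
  | H W ih =>
    rcases W.eq_empty_or_nonempty with rfl | hW
    · exact ⟨fun _ _ => 0, by simp [IsGoodOn]⟩
    obtain ⟨v, hvW, hred⟩ := hmad.exists_reducible hW
    obtain ⟨φ, hφ⟩ := ih (W.erase v) (erase_ssubset hvW)
    have hv : v ∉ W.erase v := notMem_erase v W
    rw [← insert_erase hvW] at hred ⊢
    refine hφ.exists_insert hΔ hv ?_
    rw [nbrsIn_insert_self] at hred
    refine hred.imp_right (Or.imp ?_ ?_)
    · rintro ⟨h3, u, hu, hu8⟩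
      rw [card_nbrsIn_insert_of_adj hv hu] at hu8
      exact ⟨h3, u, hu, by omega⟩
    · rintro ⟨h4, h⟩
      refine ⟨h4, h.trans (card_le_card fun u hu => ?_)⟩
      rw [mem_filter] at hu ⊢
      have := card_nbrsIn_insert_of_adj hv hu.1
      exact ⟨hu.1, by omega⟩

end Main

theorem incidence_chromatic_mad_lt_nine_halves {V : Type*} [Fintype V] (G : SimpleGraph V)
    [DecidableRel G.Adj] (hmad : MadLT G (9 / 2)) (hΔ : 9 ≤ G.maxDegree) :
    incChromaticNumber G ≤ G.maxDegree + 4 := by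
  obtain ⟨φ, hφ⟩ := hmad.exists_isGoodOn hΔ Finset.univ
  exact Nat.sInf_le ⟨φ, hφ.isIncidenceColoring⟩
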